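/- Let 1 ≤ m' ≤ m, m ≤ n, m' ≤ n', and let r be the remainder upon dividing n by n'. If ⌊n/n'⌋·(m'−1) + min(r, m'−1) ≥ m, then there is no Borel function ψ : 2^ℕ → 2^ℕ such that the image ψ(S) of every (n,m)-splitting family S ⊆ 2^ℕ is an (n',m')-splitting family. (Hence there is no Borel Tukey morphism from 𝔰_{n,m} to 𝔰_{n',m'} in this case.) -/

import Mathlib

/-- `c ∈ 2^ℕ` splits the infinite set `A ⊆ ℕ`: both `{k ∈ A | c k = false}`
and `{k ∈ A | c k = true}` are infinite. -/
def Splits (c : ℕ → Bool) (A : Set ℕ) : Prop :=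
  {k ∈ A | c k = false}.Infinite ∧ {k ∈ A | c k = true}.Infinite

/-- `S ⊆ 2^ℕ` is an `(n,m)`-splitting family: for all infinite
`A_1, …, A_n ⊆ ℕ` some `c ∈ S` splits at least `m` of the `A_i`. -/
def NMSplitting (n m : ℕ) (S : Set (ℕ → Bool)) : Prop :=
  ∀ A : Fin n → Set ℕ, (∀ i, (A i).Infinite) →
    ∃ c ∈ S, m ≤ {i : Fin n | Splits c (A i)}.ncard

/-!
Up to a meagre set, `{c | ψ c k = 0}` is an open set `U k`.

If some nonempty open set `O` misses infinitely many `U k`, then the generic points of `O` form an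
`(n, m)`-splitting family, while their images under `ψ` all take the value `1` on an infinite set.

Otherwise `ℕ` can be cut into finite blocks, the `i`-th of which is assigned a coordinate `b i`, so
that `c` can be prescribed freely off any infinite collection of blocks and still be completed so
that `ψ c` vanishes at the coordinates assigned to the remaining blocks. Colour the blocks with
`n'` colours, each used infinitely often, let `B i` be the set of coordinates assigned to blocks of
colour `i`, and let `S` consist of the `c` such that `ψ c` splits at most `m' - 1` of the `B i`.
Each of `n` given infinite sets has an infinite part lying in blocks of a single colour; choosing
the `m' - 1` most frequent colours catches at least `⌊n/n'⌋ (m' - 1) + min r (m' - 1)` of these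
sets. They are split by prescribing `c` on the blocks of the chosen colours; as `ψ c` vanishes on
`B i` for every other colour `i`, this `c` belongs to `S`.
-/

open Filter Finset PiNat

theorem exists_card_eq_forall_notMem_le {κ α : Type*} [Fintype κ] [LinearOrder α] (a : κ → α)
    {t : ℕ} (ht : t ≤ Fintype.card κ) :
    ∃ I : Finset κ, #I = t ∧ ∀ i ∈ I, ∀ k ∉ I, a k ≤ a i := by
  classical
  induction t with
  | zero => exact ⟨∅, by simp⟩
  | succ t ih =>
    obtain ⟨I, hI, hle⟩ := ih (by lia)
    have hIc : Iᶜ.Nonempty := by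
      rw [← card_pos, card_compl]
      lia
    obtain ⟨i₀, hi₀, hmax⟩ := exists_max_image Iᶜ a hIc
    rw [mem_compl] at hi₀
    refine ⟨insert i₀ I, by rw [card_insert_of_notMem hi₀, hI], fun i hi k hk => ?_⟩
    rw [mem_insert, not_or] at hk
    rcases mem_insert.1 hi with rfl | hi
    · exact hmax k (mem_compl.2 hk.2)
    · exact hle i hi k hk.2

theorem exists_card_eq_div_mul_add_min_mod_le_sum {κ : Type*} [Fintype κ] (a : κ → ℕ) {t : ℕ}
    (ht : t ≤ Fintype.card κ) :
    ∃ I : Finset κ, #I = t ∧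
      (∑ i, a i) / Fintype.card κ * t + min ((∑ i, a i) % Fintype.card κ) t ≤ ∑ i ∈ I, a i := by
  classical
  obtain ⟨I, hI, hle⟩ := exists_card_eq_forall_notMem_le a ht
  refine ⟨I, hI, ?_⟩
  have hdiv := Nat.div_add_mod (∑ i, a i) (Fintype.card κ)
  set q := (∑ i, a i) / Fintype.card κ
  by_cases hall : ∀ i ∈ I, q + 1 ≤ a i
  · calc q * t + min _ t ≤ q * t + t := by gcongr; exact min_le_right _ _
      _ = #I • (q + 1) := by rw [hI, smul_eq_mul]; ring
      _ ≤ ∑ i ∈ I, a i := card_nsmul_le_sum I a _ hall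
  · push Not at hall
    obtain ⟨i, hi, hiq⟩ := hall
    have hcompl : ∑ k ∈ Iᶜ, a k ≤ (Fintype.card κ - t) * q := by
      rw [← hI, ← card_compl, ← smul_eq_mul]
      exact sum_le_card_nsmul _ a _ fun k hk =>
        (hle i hi k (mem_compl.1 hk)).trans (Nat.lt_succ_iff.1 hiq)
    have hsum := sum_add_sum_compl I a
    have hmin := min_le_left ((∑ i, a i) % Fintype.card κ) t
    obtain ⟨u, hu⟩ := Nat.exists_eq_add_of_le ht
    rw [hu] at hdiv hcompl hmin ⊢
    rw [Nat.add_sub_cancel_left] at hcompl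
    nlinarith

theorem exists_card_eq_div_mul_add_min_mod_le_card_filter {ι κ : Type*} [Fintype ι] [Fintype κ]
    [DecidableEq κ] (f : ι → κ) {t : ℕ} (ht : t ≤ Fintype.card κ) :
    ∃ I : Finset κ, #I = t ∧
      Fintype.card ι / Fintype.card κ * t + min (Fintype.card ι % Fintype.card κ) t ≤
        #{l | f l ∈ I} := by
  have hfib (I : Finset κ) : #{l | f l ∈ I} = ∑ i ∈ I, #{l | f l = i} := by
    rw [card_eq_sum_card_fiberwise (f := f) (t := I) fun l hl => by simpa using hl]
    refine sum_congr rfl fun i hi => ?_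
    rw [filter_filter]
    congr 1
    ext l
    simp only [mem_filter, mem_univ, true_and, and_iff_right_iff_imp]
    rintro rfl
    exact hi
  obtain ⟨I, hI, hle⟩ := exists_card_eq_div_mul_add_min_mod_le_sum (fun i => #{l | f l = i}) ht
  rw [← hfib univ] at hle
  exact ⟨I, hI, by simpa [hfib] using hle⟩

theorem exists_forall_infinite_preimage_singleton (κ : Type*) [Countable κ] [Nonempty κ] :
    ∃ ρ : ℕ → κ, ∀ i, (ρ ⁻¹' {i}).Infinite := by
  obtain ⟨e, he⟩ := exists_surjective_nat κ
  refine ⟨fun k => e k.unpair.1, fun i => ?_⟩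
  obtain ⟨a, rfl⟩ := he i
  refine Set.infinite_of_injective_forall_mem (f := Nat.pair a) (fun k l hkl => ?_) (by simp)
  exact (Nat.pair_eq_pair.1 hkl).2

theorem exists_infinite_inter_preimage_singleton {α κ : Type*} [Finite κ] {A : Set α}
    (hA : A.Infinite) (f : α → κ) : ∃ i, (A ∩ f ⁻¹' {i}).Infinite := by
  by_contra! h
  exact hA (Set.Finite.of_finite_fibers f (Set.toFinite _) fun i _ => h i)

section Blocks

variable {E : ℕ → Type*}

/-- The block `[p, q)` *forces* `W`: every sequence can be changed from its `p`-th entry on so that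
its first `q` entries already guarantee membership in `W`. -/
def BlockForces (p q : ℕ) (W : Set (∀ n, E n)) : Prop :=
  ∀ c, ∃ d ∈ cylinder c p, cylinder d q ⊆ W

theorem exists_forall_mem_cylinder {s : ℕ → ∀ n, E n} {j : ℕ → ℕ} (hj : StrictMono j)
    (hs : ∀ i, s (i + 1) ∈ cylinder (s i) (j i)) : ∃ c, ∀ i, c ∈ cylinder (s i) (j i) := by
  have hcoh {i l : ℕ} (hil : i ≤ l) : s l ∈ cylinder (s i) (j i) := by
    induction l, hil using Nat.le_induction with
    | base => exact self_mem_cylinder _ _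
    | succ l hil ih =>
      rw [← mem_cylinder_iff_eq.1 ih]
      exact cylinder_anti _ (hj.monotone hil) (hs l)
  refine ⟨fun a => s (a + 1) a, fun i a ha => ?_⟩
  rcases le_total i (a + 1) with h | h
  · exact hcoh h a ha
  · exact (hcoh h a (a.lt_succ_self.trans_le hj.le_apply)).symm

theorem exists_forall_mem_forall_notMem_Ico_eq {j : ℕ → ℕ} (hj : StrictMono j)
    {W : ℕ → Set (∀ n, E n)} (hW : ∀ i, BlockForces (j i) (j (i + 1)) (W i))
    (P : Set ℕ) (x : ∀ n, E n) :
    ∃ c, (∀ i ∈ P, c ∈ W i) ∧ ∀ a, (∀ i ∈ P, a ∉ Set.Ico (j i) (j (i + 1))) → c a = x a := by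
  classical
  choose e he heW using hW
  obtain ⟨s, hs₀, hs⟩ : ∃ s : ℕ → ∀ n, E n, s 0 = x ∧ ∀ i a, s (i + 1) a =
      if i ∈ P then if a < j (i + 1) then e i (s i) a else x a else s i a :=
    ⟨fun i => i.rec x fun i c a => if i ∈ P then if a < j (i + 1) then e i c a else x a else c a,
      rfl, fun _ _ => rfl⟩
  have hs_cyl (i : ℕ) : s (i + 1) ∈ cylinder (s i) (j i) := fun a ha => by
    rw [hs, if_pos (ha.trans (hj i.lt_succ_self)), he i (s i) a ha, ite_self]
  obtain ⟨c, hc⟩ := exists_forall_mem_cylinder hj hs_cyl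
  refine ⟨c, fun i hi => heW i (s i) fun a ha => ?_, fun a ha => ?_⟩
  · rw [hc (i + 1) a ha, hs, if_pos hi, if_pos ha]
  · have hsx (i : ℕ) : s i a = x a := by
      induction i with
      | zero => rw [hs₀]
      | succ i ih =>
        rw [hs]
        split_ifs with hi hai
        · have haj : a < j i := not_le.1 fun h => ha i hi ⟨h, hai⟩
          rw [he i (s i) a haj, ih]
        · rfl
        · exact ih
    rw [hc (a + 1) a (a.lt_succ_self.trans_le hj.le_apply), hsx]

theorem exists_forall_mem_Ico_succ_eq {j : ℕ → ℕ} (hj : StrictMono j) :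
    ∃ g : ℕ → ℕ, ∀ i, ∀ a ∈ Set.Ico (j i) (j (i + 1)), g a = i := by
  refine ⟨fun a => Nat.findGreatest (j · ≤ a) a, fun i a ha => ?_⟩
  refine Nat.findGreatest_eq_iff.2 ⟨hj.le_apply.trans ha.1, fun _ => ha.1, fun l hl _ => ?_⟩
  exact not_le.2 (ha.2.trans_le (hj.monotone hl))

theorem finite_range_cylinder [∀ n, Finite (E n)] (N : ℕ) :
    (Set.range fun c : ∀ n, E n => cylinder c N).Finite := by
  let restrict (c : ∀ n, E n) (i : Fin N) : E i := c i
  refine (Set.finite_range fun σ => restrict ⁻¹' {σ}).subset ?_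
  rintro _ ⟨c, rfl⟩
  refine ⟨restrict c, ?_⟩
  ext d
  simp [restrict, funext_iff, Fin.forall_iff]

variable [∀ n, TopologicalSpace (E n)] [∀ n, DiscreteTopology (E n)]

theorem exists_cylinder_subset {W : Set (∀ n, E n)} (hW : IsOpen W) {x : ∀ n, E n} (hx : x ∈ W) :
    ∃ N, cylinder x N ⊆ W := by
  obtain ⟨_, ⟨y, N, rfl⟩, hxy, hyW⟩ :=
    (isTopologicalBasis_cylinders E).exists_subset_of_mem_open hx hW
  exact ⟨N, by rwa [mem_cylinder_iff_eq.1 hxy]⟩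

variable [∀ n, Finite (E n)]

theorem eventually_blockForces {W : Set (∀ n, E n)} (hW : IsOpen W) {N : ℕ}
    (hWN : ∀ c, (W ∩ cylinder c N).Nonempty) : ∀ᶠ M in atTop, BlockForces N M W := by
  have h : ∀ C ∈ Set.range fun c : ∀ n, E n => cylinder c N,
      ∀ᶠ M in atTop, ∃ d ∈ C, cylinder d M ⊆ W := by
    rintro _ ⟨c, rfl⟩
    obtain ⟨d, hdW, hdc⟩ := hWN c
    obtain ⟨M₀, hM₀⟩ := exists_cylinder_subset hW hdW
    filter_upwards [eventually_ge_atTop M₀] with M hM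
    exact ⟨d, hdc, (cylinder_anti d hM).trans hM₀⟩
  filter_upwards [(eventually_all_finite (finite_range_cylinder N)).2 h] with M hM c
  exact hM _ ⟨c, rfl⟩

theorem eventually_forall_inter_cylinder_nonempty {U : ℕ → Set (∀ n, E n)}
    (hUO : ∀ O, IsOpen O → O.Nonempty → ∀ᶠ k in atTop, (U k ∩ O).Nonempty) (N : ℕ) :
    ∀ᶠ k in atTop, ∀ c, (U k ∩ cylinder c N).Nonempty := by
  have h : ∀ C ∈ Set.range fun c : ∀ n, E n => cylinder c N, ∀ᶠ k in atTop, (U k ∩ C).Nonempty := by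
    rintro _ ⟨c, rfl⟩
    exact hUO _ (isOpen_cylinder E c N) ⟨c, self_mem_cylinder c N⟩
  filter_upwards [(eventually_all_finite (finite_range_cylinder N)).2 h] with k hk c
  exact hk _ ⟨c, rfl⟩

theorem exists_strictMono_forall_blockForces {U V : ℕ → Set (∀ n, E n)} (hU : ∀ k, IsOpen (U k))
    (hUO : ∀ O, IsOpen O → O.Nonempty → ∀ᶠ k in atTop, (U k ∩ O).Nonempty)
    (hV : ∀ i, IsOpen (V i)) (hVd : ∀ i, Dense (V i)) :
    ∃ j b : ℕ → ℕ, StrictMono j ∧ ∀ i, b i ∈ Set.Ico (j i) (j (i + 1)) ∧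
      BlockForces (j i) (j (i + 1)) (U (b i) ∩ V i) := by
  have hstep (i N : ℕ) : ∃ M k, k ∈ Set.Ico N M ∧ BlockForces N M (U k ∩ V i) := by
    obtain ⟨k, hkU, hNk⟩ := ((eventually_forall_inter_cylinder_nonempty hUO N).and
      (eventually_ge_atTop N)).exists
    have hUV (c : ∀ n, E n) : (U k ∩ V i ∩ cylinder c N).Nonempty := by
      rw [Set.inter_right_comm]
      exact (hVd i).inter_open_nonempty _ ((hU k).inter (isOpen_cylinder E c N)) (hkU c)
    obtain ⟨M, hM, hkM⟩ := ((eventually_blockForces ((hU k).inter (hV i)) hUV).and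
      (eventually_gt_atTop k)).exists
    exact ⟨M, k, ⟨hNk, hkM⟩, hM⟩
  choose M k hk hforce using hstep
  let j : ℕ → ℕ := fun i => i.rec 0 M
  have hj : StrictMono j := strictMono_nat_of_lt_succ fun i => (hk i _).1.trans_lt (hk i _).2
  exact ⟨j, fun i => k i (j i), hj, fun i => ⟨hk i _, hforce i _⟩⟩

end Blocks

theorem exists_antitone_isOpen_dense_iInter_subset {X : Type*} [TopologicalSpace X] [BaireSpace X]
    {G : Set X} (hG : G ∈ residual X) :
    ∃ V : ℕ → Set X, Antitone V ∧ (∀ i, IsOpen (V i)) ∧ (∀ i, Dense (V i)) ∧ ⋂ i, V i ⊆ G := by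
  obtain ⟨t, htG, htδ, htd⟩ := mem_residual.1 hG
  obtain ⟨D, hD, rfl⟩ := isGδ_iff_eq_iInter_nat.1 htδ
  refine ⟨Set.dissipate D, Set.antitone_dissipate, fun i => ?_, fun i => ?_, ?_⟩
  · exact (Set.finite_Iic i).isOpen_biInter fun l _ => hD l
  · exact htd.mono (Set.subset_iInter₂ fun l _ => Set.iInter_subset D l)
  · rwa [Set.iInter_dissipate]

theorem exists_isOpen_eventually_residual_forall_mem_iff {X κ : Type*} [TopologicalSpace X]
    [Countable κ] {s : κ → Set X} (hs : ∀ k, BaireMeasurableSet (s k)) :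
    ∃ U : κ → Set X, (∀ k, IsOpen (U k)) ∧ ∀ᶠ c in residual X, ∀ k, c ∈ s k ↔ c ∈ U k := by
  choose U hU hsU using fun k => (hs k).residualEq_isOpen
  exact ⟨U, hU, eventually_countable_forall.2 fun k => eventuallyEq_set.1 (hsU k)⟩

/-- `g a` is the block containing `a`, and `b i` is the coordinate assigned to the block `i`. -/
theorem exists_blocks_of_eventually_inter_nonempty {E : ℕ → Type*} [∀ n, TopologicalSpace (E n)]
    [∀ n, DiscreteTopology (E n)] [∀ n, Finite (E n)] {U : ℕ → Set (∀ n, E n)}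
    (hU : ∀ k, IsOpen (U k))
    (hUO : ∀ O, IsOpen O → O.Nonempty → ∀ᶠ k in atTop, (U k ∩ O).Nonempty)
    {G : Set (∀ n, E n)} (hG : G ∈ residual (∀ n, E n)) :
    ∃ g b : ℕ → ℕ, b.Injective ∧ ∀ P : Set ℕ, P.Infinite → ∀ x : ∀ n, E n, ∃ c ∈ G,
      (∀ i ∈ P, c ∈ U (b i)) ∧ ∀ a, g a ∉ P → c a = x a := by
  obtain ⟨V, hVanti, hV, hVd, hVG⟩ := exists_antitone_isOpen_dense_iInter_subset hG
  obtain ⟨j, b, hj, hb⟩ := exists_strictMono_forall_blockForces hU hUO hV hVd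
  obtain ⟨g, hg⟩ := exists_forall_mem_Ico_succ_eq hj
  have hgb : Function.LeftInverse g b := fun i => hg i _ (hb i).1
  refine ⟨g, b, hgb.injective, fun P hP x => ?_⟩
  obtain ⟨c, hcP, hcx⟩ := exists_forall_mem_forall_notMem_Ico_eq hj (fun i => (hb i).2) P x
  refine ⟨c, hVG (Set.mem_iInter.2 fun l => ?_), fun i hi => (hcP i hi).1, fun a ha => ?_⟩
  · obtain ⟨i, hiP, hli⟩ := hP.exists_gt l
    exact hVanti hli.le (hcP i hiP).2
  · exact hcx a fun i hi hai => ha (hg i a hai ▸ hi)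

theorem eventually_residual_infinite_sep_eq {α : Type*} [TopologicalSpace α] [DiscreteTopology α]
    {A : Set ℕ} (hA : A.Infinite) (b : α) :
    ∀ᶠ c in residual (ℕ → α), {k ∈ A | c k = b}.Infinite := by
  have h (N : ℕ) : ∀ᶠ c in residual (ℕ → α), ∃ k ∈ A, N < k ∧ c k = b := by
    refine residual_of_dense_open ?_ (dense_iff_inter_open.2 fun W hW ⟨x, hx⟩ => ?_)
    · simp only [← exists_prop, Set.ofPred_exists]
      exact isOpen_iUnion fun k => isOpen_iUnion fun _ => isOpen_iUnion fun _ =>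
        (isOpen_discrete {b}).preimage (f := fun c : ℕ → α => c k) (continuous_apply k)
    · obtain ⟨M, hM⟩ := exists_cylinder_subset hW hx
      obtain ⟨k, hk, hlt⟩ := hA.exists_gt (max M N)
      have hupdate : Function.update x k b ∈ cylinder x M :=
        cylinder_anti x (le_max_left M N |>.trans hlt.le) (update_mem_cylinder x k b)
      exact ⟨Function.update x k b, hM hupdate, k, hk, (le_max_right M N).trans_lt hlt,
        Function.update_self k b x⟩
  filter_upwards [eventually_countable_forall.2 h] with c hc
  refine Set.infinite_of_forall_exists_gt fun N => ?_
  obtain ⟨k, hk, hNk, hck⟩ := hc N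
  exact ⟨k, ⟨hk, hck⟩, hNk⟩

theorem Splits.mono {c : ℕ → Bool} {A B : Set ℕ} (h : Splits c A) (hAB : A ⊆ B) : Splits c B :=
  ⟨h.1.mono fun _ hk => ⟨hAB hk.1, hk.2⟩, h.2.mono fun _ hk => ⟨hAB hk.1, hk.2⟩⟩

theorem Splits.congr {c d : ℕ → Bool} {A : Set ℕ} (h : Splits c A) (hcd : Set.EqOn d c A) :
    Splits d A :=
  ⟨h.1.mono fun _ hk => ⟨hk.1, (hcd hk.1).trans hk.2⟩,
    h.2.mono fun _ hk => ⟨hk.1, (hcd hk.1).trans hk.2⟩⟩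

theorem not_splits_of_forall_eq {c : ℕ → Bool} {A : Set ℕ} {v : Bool} (h : ∀ k ∈ A, c k = v) :
    ¬ Splits c A := by
  rintro ⟨hfalse, htrue⟩
  obtain ⟨k, hk, hk'⟩ := hfalse.nonempty
  obtain ⟨l, hl, hl'⟩ := htrue.nonempty
  exact Bool.false_ne_true (hk'.symm.trans <| (h k hk).trans <| (h l hl).symm.trans hl')

theorem eventually_residual_forall_splits {κ : Type*} [Countable κ] {A : κ → Set ℕ}
    (hA : ∀ i, (A i).Infinite) : ∀ᶠ c in residual (ℕ → Bool), ∀ i, Splits c (A i) :=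
  eventually_countable_forall.2 fun i =>
    (eventually_residual_infinite_sep_eq (hA i) false).and
      (eventually_residual_infinite_sep_eq (hA i) true)

theorem nmSplitting_of_not_isMeagre {n m : ℕ} (hmn : m ≤ n) {S : Set (ℕ → Bool)}
    (hS : ¬ IsMeagre S) : NMSplitting n m S := by
  intro A hA
  obtain ⟨c, hcS, hcA⟩ : ∃ c ∈ S, ∀ i, Splits c (A i) := by
    by_contra! h
    exact hS <| (eventually_residual_forall_splits hA).mono fun c hc hcS =>
      (h c hcS).elim fun i hi => hi (hc i)
  exact ⟨c, hcS, by simpa [hcA] using hmn⟩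

theorem exists_nmSplitting_not_nmSplitting_image_of_frequently_inter_eq_empty {n m n' m' : ℕ}
    (hmn : m ≤ n) (hm' : 0 < m') {ψ : (ℕ → Bool) → ℕ → Bool} {U : ℕ → Set (ℕ → Bool)}
    (hψU : ∀ᶠ c in residual (ℕ → Bool), ∀ k, ψ c k = false → c ∈ U k)
    {O : Set (ℕ → Bool)} (hO : IsOpen O) (hOne : O.Nonempty)
    (hUO : ∃ᶠ k in atTop, U k ∩ O = ∅) :
    ∃ S, NMSplitting n m S ∧ ¬ NMSplitting n' m' (ψ '' S) := by
  refine ⟨{c ∈ O | ∀ k, ψ c k = false → c ∈ U k}, nmSplitting_of_not_isMeagre hmn fun hS => ?_,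
    fun hS => ?_⟩
  · refine not_isMeagre_of_isOpen hO hOne (mem_of_superset (inter_mem hS hψU) ?_)
    exact fun c hc hcO => hc.1 ⟨hcO, hc.2⟩
  · obtain ⟨_, ⟨c, ⟨hcO, hcU⟩, rfl⟩, hle⟩ := hS _ fun _ => Nat.frequently_atTop_iff_infinite.1 hUO
    have htrue : ∀ k ∈ {k | U k ∩ O = ∅}, ψ c k = true := fun k hk =>
      Bool.eq_true_of_not_eq_false fun hfalse => hk.subset ⟨hcU k hfalse, hcO⟩
    have hsplits := not_splits_of_forall_eq htrue
    simp only [hsplits, Set.ofPred_false, Set.ncard_empty] at hle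
    lia

theorem exists_nmSplitting_not_nmSplitting_image_of_blocks {n m n' t : ℕ} (ht : t < n')
    (hm : m ≤ n / n' * t + min (n % n') t) {ψ : (ℕ → Bool) → ℕ → Bool} {g b : ℕ → ℕ}
    (hb : b.Injective)
    (hψ : ∀ P : Set ℕ, P.Infinite → ∀ x : ℕ → Bool, ∃ c, (∀ i ∈ P, ψ c (b i) = false) ∧
      ∀ a, g a ∉ P → c a = x a) :
    ∃ S, NMSplitting n m S ∧ ¬ NMSplitting n' (t + 1) (ψ '' S) := by
  have : NeZero n' := ⟨by lia⟩
  obtain ⟨ρ, hρ⟩ := exists_forall_infinite_preimage_singleton (Fin n')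
  refine ⟨{c | {i | Splits (ψ c) (b '' (ρ ⁻¹' {i}))}.ncard ≤ t}, fun A hA => ?_, fun hS => ?_⟩
  · choose f hf using fun l => exists_infinite_inter_preimage_singleton (hA l) (ρ ∘ g)
    obtain ⟨I, hI, hle⟩ := exists_card_eq_div_mul_add_min_mod_le_card_filter f
      (ht.le.trans_eq (Fintype.card_fin n').symm)
    obtain ⟨i₀, hi₀⟩ : ∃ i₀, i₀ ∉ I := by
      by_contra! h
      simp [eq_univ_of_forall h] at hI
      lia
    have hP : {k | ρ k ∉ I}.Infinite := (hρ i₀).mono fun k hk => by rwa [← hk] at hi₀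
    obtain ⟨x, hx⟩ := (dense_of_mem_residual (eventually_residual_forall_splits hf)).nonempty
    obtain ⟨c, hcfalse, hcx⟩ := hψ _ hP x
    refine ⟨c, ?_, ?_⟩
    · have hsub : {i | Splits (ψ c) (b '' (ρ ⁻¹' {i}))} ⊆ (I : Set (Fin n')) := by
        intro i hi
        by_contra hiI
        refine not_splits_of_forall_eq (v := false) ?_ hi
        rintro _ ⟨k, rfl, rfl⟩
        exact hcfalse k hiI
      exact (Set.ncard_le_ncard hsub).trans_eq (by rw [Set.ncard_coe_finset, hI])
    · have hsub : (({l | f l ∈ I} : Finset (Fin n)) : Set (Fin n)) ⊆ {l | Splits c (A l)} := by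
        intro l hl
        have hlI : f l ∈ I := by simpa using hl
        refine ((hx l).congr fun a ha => hcx a ?_).mono Set.inter_subset_left
        have hρa : ρ (g a) = f l := ha.2
        simpa [hρa] using hlI
      rw [Fintype.card_fin, Fintype.card_fin] at hle
      calc m ≤ n / n' * t + min (n % n') t := hm
        _ ≤ #{l | f l ∈ I} := hle
        _ ≤ {l | Splits c (A l)}.ncard := by
          rw [← Set.ncard_coe_finset]
          exact Set.ncard_le_ncard hsub
  · obtain ⟨_, ⟨c, hc, rfl⟩, hle⟩ := hS _ fun i => (hρ i).image hb.injOn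
    exact (Nat.lt_of_succ_le hle).not_ge hc

theorem stmt17_general {m n m' n' : ℕ} (hm' : 1 ≤ m') (hm'n' : m' ≤ n')
    (hcond : m ≤ (n / n') * (m' - 1) + min (n % n') (m' - 1))
    {ψ : (ℕ → Bool) → (ℕ → Bool)} (hψ : ∀ k, BaireMeasurableSet {c | ψ c k = false}) :
    ∃ S : Set (ℕ → Bool), NMSplitting n m S ∧ ¬ NMSplitting n' m' (ψ '' S) := by
  have hmn : m ≤ n := calc
    m ≤ n / n' * (m' - 1) + min (n % n') (m' - 1) := hcond
    _ ≤ n / n' * n' + n % n' := by gcongr <;> lia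
    _ = n := Nat.div_add_mod' n n'
  obtain ⟨U, hU, hψU⟩ := exists_isOpen_eventually_residual_forall_mem_iff hψ
  by_cases! hUO : ∀ O, IsOpen O → O.Nonempty → ∀ᶠ k in atTop, (U k ∩ O).Nonempty
  · obtain ⟨g, b, hb, hgb⟩ := exists_blocks_of_eventually_inter_nonempty hU hUO hψU
    rw [← Nat.sub_add_cancel hm']
    refine exists_nmSplitting_not_nmSplitting_image_of_blocks (g := g) (by lia) hcond hb
      fun P hP x => ?_
    obtain ⟨c, hcU, hcP, hcx⟩ := hgb P hP x
    exact ⟨c, fun i hi => (hcU (b i)).2 (hcP i hi), hcx⟩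
  · obtain ⟨O, hO, hOne, hUO⟩ := hUO
    exact exists_nmSplitting_not_nmSplitting_image_of_frequently_inter_eq_empty hmn hm'
      (hψU.mono fun c hc k => (hc k).1) hO hOne hUO

/-- Let `1 ≤ m' ≤ m ≤ n` and `m' ≤ n'` and let `r = n % n'`.  If
`⌊n/n'⌋·(m'−1) + min(r, m'−1) ≥ m`, then there is no Borel `ψ : 2^ℕ → 2^ℕ`
carrying every `(n,m)`-splitting family to an `(n',m')`-splitting family.
(No Borel Tukey morphism from 𝔰_{n,m} to 𝔰_{n',m'} in this case.) -/
theorem stmt17 (m n m' n' : ℕ) (hm' : 1 ≤ m') (hm'm : m' ≤ m) (hmn : m ≤ n)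
    (hm'n' : m' ≤ n')
    (hcond : m ≤ (n / n') * (m' - 1) + min (n % n') (m' - 1)) :
    ¬ ∃ ψ : (ℕ → Bool) → (ℕ → Bool),
      Measurable ψ ∧
      ∀ S : Set (ℕ → Bool), NMSplitting n m S → NMSplitting n' m' (ψ '' S) := by
  rintro ⟨ψ, hψ, hψS⟩
  obtain ⟨S, hS, hψS'⟩ := stmt17_general hm' hm'n' hcond fun k =>
    (measurableSet_eq_fun ((measurable_pi_apply k).comp hψ) measurable_const).baireMeasurableSet
  exact hψS' (hψS S hS)
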